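/- Fix a nonzero integer k. Then for all odd composite n, |Σ_{w ∈ W(n)} e(kw/n)| / #W(n) ≤ C_k · (log n)/√n for some constant C_k depending only on k, where W(n) is the Miller-Rabin witness set. -/

import Mathlib

open Finset

noncomputable def e (x : ℝ) : ℂ := Complex.exp (2 * Real.pi * Complex.I * x)

/-- The 2-adic valuation of n - 1. -/
def s2 (n : ℕ) : ℕ := (n - 1).factorization 2

/-- The odd part of n - 1. -/
def oddPart (n : ℕ) : ℕ := (n - 1) / 2 ^ s2 n

/-- The Miller-Rabin witness set of n. -/
def witnessSet (n : ℕ) : Finset ℕ :=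
  (Finset.range n).filter (fun a => 1 < a ∧ Nat.gcd a n = 1 ∧
    (a : ZMod n) ^ oddPart n ≠ 1 ∧ ∀ j < s2 n, (a : ZMod n) ^ (2 ^ j * oddPart n) ≠ -1)

lemma e_mul_div_eq_stdAddChar (k : ℤ) (n : ℕ) [NeZero n] (x : ZMod n) :
    e ((k : ℝ) * x.val / n) = ZMod.stdAddChar ((k : ZMod n) * x) := by
  have h : (k : ZMod n) * x = ((k * x.val : ℤ) : ZMod n) := by simp
  rw [h, ZMod.stdAddChar_coe, e]
  congr 1
  push_cast
  ring

lemma sum_norm_sq_stdAddChar {n : ℕ} [NeZero n] (A : Finset (ZMod n)) :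
    ∑ x : ZMod n, ‖∑ a ∈ A, ZMod.stdAddChar (x * a)‖ ^ 2 = (n : ℝ) * #A := by
  have h : ∑ x : ZMod n, ((‖∑ a ∈ A, ZMod.stdAddChar (x * a)‖ ^ 2 : ℝ) : ℂ) = (n : ℂ) * #A := by
    have expand (x : ZMod n) : ((‖∑ a ∈ A, ZMod.stdAddChar (x * a)‖ ^ 2 : ℝ) : ℂ) =
        ∑ a ∈ A, ∑ b ∈ A, ZMod.stdAddChar (x * (a - b)) := by
      push_cast
      rw [← Complex.mul_conj', map_sum, Finset.sum_mul_sum]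
      refine sum_congr rfl fun a _ ↦ sum_congr rfl fun b _ ↦ ?_
      rw [← AddChar.map_neg_eq_conj, ← AddChar.map_add_eq_mul]
      ring_nf
    simp_rw [expand]
    rw [sum_comm]
    have inner (a : ZMod n) (ha : a ∈ A) :
        ∑ x : ZMod n, ∑ b ∈ A, (ZMod.stdAddChar (x * (a - b)) : ℂ) = n := by
      rw [sum_comm]
      simp_rw [AddChar.sum_mulShift _ (ZMod.isPrimitive_stdAddChar n), sub_eq_zero, ZMod.card]
      simp [ha]
    rw [sum_congr rfl inner]
    simp [mul_comm]
  exact_mod_cast h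

lemma card_intCast_mul_eq_le {n : ℕ} [NeZero n] {k : ℤ} (hk : k ≠ 0) (y : ZMod n) :
    #{x : ZMod n | (k : ZMod n) * x = y} ≤ k.natAbs := by
  classical
  rcases (filter (fun x : ZMod n ↦ (k : ZMod n) * x = y) univ).eq_empty_or_nonempty with h | ⟨x₀, h⟩
  · simp [h]
  · refine le_trans ?_ (IsAddCyclic.card_nsmul_eq_zero_le (α := ZMod n) (Int.natAbs_pos.mpr hk))
    refine card_le_card_of_injOn (fun x ↦ x - x₀) ?_ (fun a _ b _ hab ↦ by simpa using hab)
    intro x hx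
    simp only [coe_filter, mem_univ, true_and, Set.mem_ofPred_eq, mem_filter] at hx h ⊢
    have h0 : k • (x - x₀) = 0 := by
      rw [zsmul_eq_mul, mul_sub, hx, h, sub_self]
    rcases Int.natAbs_eq k with hk' | hk' <;> rw [hk'] at h0
    · simpa using h0
    · simpa using h0

lemma norm_sum_stdAddChar_pow_eq_le {n : ℕ} [NeZero n] {k : ℤ} (hk : k ≠ 0) (m : ℕ)
    (c : (ZMod n)ˣ) :
    ‖∑ u : (ZMod n)ˣ with u ^ m = c, ZMod.stdAddChar ((k : ZMod n) * (u : ZMod n))‖ ≤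
      √(k.natAbs * n) := by
  classical
  set A : Finset (ZMod n)ˣ := {u | u ^ m = c} with hA
  set H : Finset (ZMod n)ˣ := {u | u ^ m = 1} with hH
  set F : ZMod n → ℂ := fun x ↦ ∑ u ∈ A, ZMod.stdAddChar (x * (u : ZMod n)) with hF
  have hHpos : 0 < #H := card_pos.mpr ⟨1, by simp [hH]⟩
  have hAH : #A ≤ #H := by
    rcases A.eq_empty_or_nonempty with h | ⟨a, ha⟩
    · simp [h]
    · refine card_le_card_of_injOn (fun x ↦ x * a⁻¹) ?_ (fun x _ y _ hxy ↦ by simpa using hxy)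
      intro x hx
      simp only [hA, hH, coe_filter, mem_univ, true_and, Set.mem_ofPred_eq, mem_filter] at hx ha ⊢
      rw [mul_pow, inv_pow, hx, ha, mul_inv_cancel]
  have hinv (x : ZMod n) (h : (ZMod n)ˣ) (hh : h ∈ H) : F (x * (h : ZMod n)) = F x := by
    simp only [hH, mem_filter, mem_univ, true_and] at hh
    refine sum_nbij' (fun u ↦ h * u) (fun u ↦ h⁻¹ * u) ?_ ?_ ?_ ?_ ?_ <;>
      simp +contextual [hA, mul_pow, hh, mul_assoc]
  have hpars : ∑ x : ZMod n, ‖F x‖ ^ 2 = n * #A := by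
    rw [← card_map ⟨Units.val, Units.val_injective⟩ (s := A), ← sum_norm_sq_stdAddChar]
    simp [hF, sum_map]
  change ‖F k‖ ≤ _
  clear_value F A H
  let fiber (x : ZMod n) := H.filter fun h : (ZMod n)ˣ ↦ (k : ZMod n) * (h : ZMod n) = x
  have key : (#H : ℝ) * ‖F k‖ ^ 2 ≤ #H * (k.natAbs * n) := by
    calc (#H : ℝ) * ‖F k‖ ^ 2 = ∑ h ∈ H, ‖F (k * (h : ZMod n))‖ ^ 2 := by
          rw [sum_congr rfl fun h hh ↦ by rw [hinv _ h hh]]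
          simp
      _ = ∑ x : ZMod n, ∑ h ∈ fiber x, ‖F (k * (h : ZMod n))‖ ^ 2 :=
          (sum_fiberwise _ _ _).symm
      _ = ∑ x : ZMod n, (#(fiber x) : ℝ) * ‖F x‖ ^ 2 := by
          refine sum_congr rfl fun x _ ↦ ?_
          rw [← nsmul_eq_mul, ← sum_const]
          refine sum_congr rfl fun h hh ↦ ?_
          rw [(mem_filter.mp hh).2]
      _ ≤ ∑ x : ZMod n, (k.natAbs : ℝ) * ‖F x‖ ^ 2 := by
          gcongr with x
          refine le_trans ?_ (card_intCast_mul_eq_le hk x)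
          refine card_le_card_of_injOn Units.val ?_ Units.val_injective.injOn
          intro h hh
          simpa using (mem_filter.mp hh).2
      _ = k.natAbs * (n * #A) := by rw [← mul_sum, hpars]
      _ ≤ k.natAbs * (n * #H) := by gcongr
      _ = #H * (k.natAbs * n) := by ring
  exact Real.le_sqrt_of_sq_le (le_of_mul_le_mul_left key (by exact_mod_cast hHpos))

lemma prod_le_card_add_one_mul_prod_sub_one (S : Finset ℕ) (hS : ∀ p ∈ S, 2 ≤ p) :
    ∏ p ∈ S, p ≤ (#S + 1) * ∏ p ∈ S, (p - 1) := by
  induction S using Finset.induction_on_max with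
  | empty => simp
  | insert p T hT ih =>
    have hp : p ∉ T := fun h ↦ lt_irrefl _ (hT p h)
    have h2 := hS p (mem_insert_self _ _)
    have hcard : #T ≤ p - 2 := by
      rw [← Nat.card_Ico]
      exact card_le_card fun x hx ↦ mem_Ico.mpr ⟨hS x (mem_insert_of_mem hx), hT x hx⟩
    have ih' := ih fun q hq ↦ hS q (mem_insert_of_mem hq)
    rw [prod_insert hp, prod_insert hp, card_insert_of_notMem hp]
    obtain ⟨q, rfl⟩ := Nat.exists_eq_add_of_le h2
    calc (2 + q) * ∏ p ∈ T, p ≤ (2 + q) * ((#T + 1) * ∏ p ∈ T, (p - 1)) := by gcongr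
      _ = ((2 + q) * (#T + 1)) * ∏ p ∈ T, (p - 1) := by ring
      _ ≤ ((#T + 1 + 1) * (2 + q - 1)) * ∏ p ∈ T, (p - 1) := by
        refine Nat.mul_le_mul_right _ ?_
        have hq : #T ≤ q := by omega
        rw [show 2 + q - 1 = q + 1 by omega]
        nlinarith
      _ = _ := by ring

lemma le_card_primeFactors_add_one_mul_totient (n : ℕ) :
    n ≤ (#n.primeFactors + 1) * n.totient := by
  have h := Nat.totient_mul_prod_primeFactors n
  have hpos : 0 < ∏ p ∈ n.primeFactors, (p - 1) :=
    prod_pos fun p hp ↦ Nat.sub_pos_of_lt (Nat.prime_of_mem_primeFactors hp).one_lt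
  have h' := prod_le_card_add_one_mul_prod_sub_one n.primeFactors
    fun p hp ↦ (Nat.prime_of_mem_primeFactors hp).two_le
  refine le_of_mul_le_mul_right ?_ hpos
  calc n * ∏ p ∈ n.primeFactors, (p - 1) = n.totient * ∏ p ∈ n.primeFactors, p := h.symm
    _ ≤ n.totient * ((#n.primeFactors + 1) * ∏ p ∈ n.primeFactors, (p - 1)) := by gcongr
    _ = _ := by ring

lemma two_pow_le_of_pow_eq_neg_one {n p j d : ℕ} (hp : p.Prime) (hp2 : p ≠ 2) (hpn : p ∣ n)
    {u : (ZMod n)ˣ} (hu : u ^ (2 ^ j * d) = -1) : 2 ^ (j + 1) ≤ p := by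
  have : Fact p.Prime := ⟨hp⟩
  have : Fact (2 < p) := ⟨lt_of_le_of_ne hp.two_le hp2.symm⟩
  set w : (ZMod p)ˣ := ZMod.unitsMap hpn u
  have hw : (w ^ d) ^ 2 ^ j = -1 := by
    rw [← pow_mul, mul_comm, ← map_pow, hu]
    ext
    simp [ZMod.unitsMap]
  have hne : (-1 : (ZMod p)ˣ) ≠ 1 := fun h ↦
    ZMod.neg_one_ne_one (by simpa using congrArg Units.val h)
  have ho : orderOf (w ^ d) = 2 ^ (j + 1) :=
    orderOf_eq_prime_pow (by rw [hw]; exact hne) (by rw [pow_succ, pow_mul, hw]; simp)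
  calc 2 ^ (j + 1) = orderOf (w ^ d) := ho.symm
    _ ≤ Fintype.card (ZMod p)ˣ := orderOf_le_card_univ
    _ = p - 1 := ZMod.card_units p
    _ ≤ p := Nat.sub_le _ _

lemma two_pow_mul_card_primeFactors_le {n j d : ℕ} (hn : Odd n)
    {u : (ZMod n)ˣ} (hu : u ^ (2 ^ j * d) = -1) : 2 ^ ((j + 1) * #n.primeFactors) ≤ n := by
  calc 2 ^ ((j + 1) * #n.primeFactors) = ∏ p ∈ n.primeFactors, 2 ^ (j + 1) := by
        rw [prod_const, pow_mul]
    _ ≤ ∏ p ∈ n.primeFactors, p := by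
        refine prod_le_prod' fun p hp ↦ ?_
        have hpn := Nat.dvd_of_mem_primeFactors hp
        refine two_pow_le_of_pow_eq_neg_one (Nat.prime_of_mem_primeFactors hp) ?_ hpn hu
        rintro rfl
        exact Nat.not_even_iff_odd.mpr hn (even_iff_two_dvd.mpr hpn)
    _ ≤ n := Nat.le_of_dvd hn.pos (Nat.prod_primeFactors_dvd n)

lemma one_add_pow_of_sq_eq_zero {R : Type*} [CommRing R] {x : R} (hx : x ^ 2 = 0) (N : ℕ) :
    (1 + x) ^ N = 1 + N * x := by
  induction N with
  | zero => simp
  | succ N ih =>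
    rw [pow_succ, ih]
    push_cast
    linear_combination (N : R) * hx

lemma exists_unit_pow_ne_one_of_not_squarefree {n : ℕ} (hn : 1 < n) (hsq : ¬ Squarefree n) :
    ∃ v : (ZMod n)ˣ, v ^ (n - 1) ≠ 1 := by
  rw [Nat.squarefree_iff_prime_squarefree] at hsq
  push Not at hsq
  obtain ⟨p, hp, r, hr⟩ := hsq
  have hrpos : 0 < r := Nat.pos_of_ne_zero (by rintro rfl; omega)
  have hx : ((p * r : ℕ) : ZMod n) ^ 2 = 0 := by
    rw [← Nat.cast_pow, ZMod.natCast_eq_zero_iff]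
    exact ⟨r, by rw [hr]; ring⟩
  have hne : ((p * r : ℕ) : ZMod n) ≠ 0 := by
    rw [Ne, ZMod.natCast_eq_zero_iff]
    intro h
    have h1 := Nat.le_of_dvd (Nat.mul_pos hp.pos hrpos) h
    have h2 : p * r * 2 ≤ p * r * p := Nat.mul_le_mul_left _ hp.two_le
    have h3 : 0 < p * r := Nat.mul_pos hp.pos hrpos
    have h4 : n = p * r * p := by rw [hr]; ring
    omega
  set x := ((p * r : ℕ) : ZMod n)
  refine ⟨⟨1 + x, 1 - x, by linear_combination -hx, by linear_combination -hx⟩, fun h ↦ hne ?_⟩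
  have h' : (1 + x) ^ (n - 1) = 1 := by simpa using congrArg Units.val h
  have hpow := one_add_pow_of_sq_eq_zero hx n
  rw [← pow_sub_one_mul (by omega : n ≠ 0), h'] at hpow
  simpa using hpow

lemma exists_unit_pow_ne_one_of_coprime_mul {p q m : ℕ} (hp : 2 < p) (hq : 2 < q)
    (hpq : p.Coprime q) {b : (ZMod (p * q))ˣ} (hb : b ^ m = -1) :
    ∃ v : (ZMod (p * q))ˣ, v ^ m ≠ 1 ∧ v ^ m ≠ -1 := by
  have : Fact (2 < p) := ⟨hp⟩
  have : Fact (2 < q) := ⟨hq⟩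
  set φ := ZMod.chineseRemainder hpq
  have hbφ : φ (b : ZMod (p * q)) ^ m = -1 := by
    rw [← map_pow, ← Units.val_pow_eq_pow_val, hb]
    simp
  have hb1 : (φ (b : ZMod (p * q))).1 ^ m = -1 := congrArg Prod.fst hbφ
  have hinv : (φ (b : ZMod (p * q))).1 * (φ ((b⁻¹ : (ZMod (p * q))ˣ) : ZMod (p * q))).1 = 1 := by
    rw [← Prod.fst_mul, ← map_mul]
    simp
  set v : (ZMod (p * q))ˣ :=
    ⟨φ.symm ((φ b).1, 1), φ.symm ((φ ((b⁻¹ : (ZMod (p * q))ˣ) : ZMod (p * q))).1, 1),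
      by rw [← map_mul, Prod.mk_mul_mk, hinv, one_mul, Prod.mk_one_one, map_one],
      by rw [← map_mul, Prod.mk_mul_mk, mul_comm (Prod.fst _), hinv, one_mul,
        Prod.mk_one_one, map_one]⟩
  have hv : φ ((v ^ m : (ZMod (p * q))ˣ) : ZMod (p * q)) = (-1, 1) := by
    rw [Units.val_pow_eq_pow_val, map_pow, RingEquiv.apply_symm_apply, Prod.pow_mk, hb1, one_pow]
  refine ⟨v, fun h ↦ ?_, fun h ↦ ?_⟩ <;> rw [h] at hv
  · have := congrArg Prod.fst hv
    simp only [Units.val_one, map_one, Prod.fst_one] at this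
    exact ZMod.neg_one_ne_one this.symm
  · have := congrArg Prod.snd hv
    simp only [Units.val_neg, Units.val_one, map_neg, map_one, Prod.snd_neg, Prod.snd_one] at this
    exact ZMod.neg_one_ne_one this

lemma exists_unit_pow_ne_one_and_ne_neg_one {n m : ℕ} (hodd : Odd n) (hnp : ¬ n.Prime) (hn : 1 < n)
    (hm : 2 * m ∣ n - 1) {b : (ZMod n)ˣ} (hb : b ^ m = -1) :
    ∃ v : (ZMod n)ˣ, v ^ m ≠ 1 ∧ v ^ m ≠ -1 := by
  by_cases hsq : Squarefree n
  · have odd_gt_two {a : ℕ} (ha : a ∣ n) (h1 : a ≠ 1) : 2 < a := by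
      obtain ⟨c, hc⟩ := hodd.of_dvd_nat ha
      omega
    obtain ⟨q, hq⟩ := n.minFac_dvd
    have hp1 : n.minFac ≠ 1 := (Nat.minFac_prime hn.ne').ne_one
    have hq1 : q ≠ 1 := by
      rintro rfl
      exact hnp (by rw [hq, mul_one]; exact Nat.minFac_prime hn.ne')
    have hp2 := odd_gt_two n.minFac_dvd hp1
    have hq2 := odd_gt_two (Dvd.intro_left _ hq.symm) hq1
    generalize n.minFac = p at *
    subst hq
    exact exists_unit_pow_ne_one_of_coprime_mul hp2 hq2 (Nat.coprime_of_squarefree_mul hsq) hb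
  · obtain ⟨v, hv⟩ := exists_unit_pow_ne_one_of_not_squarefree hn hsq
    obtain ⟨c, hc⟩ := hm
    refine ⟨v, fun h ↦ hv ?_, fun h ↦ hv ?_⟩ <;>
      rw [hc, mul_comm 2 m, pow_mul, pow_mul, h] <;> simp

/-- The residue classes of the Miller-Rabin witnesses of `n`. -/
def witnessUnits (n : ℕ) [NeZero n] : Finset (ZMod n)ˣ :=
  {u | u ^ oddPart n ≠ 1 ∧ ∀ j < s2 n, u ^ (2 ^ j * oddPart n) ≠ -1}

lemma two_pow_s2_mul_oddPart (n : ℕ) : 2 ^ s2 n * oddPart n = n - 1 :=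
  Nat.ordProj_mul_ordCompl_eq_self (n - 1) 2

lemma odd_oddPart {n : ℕ} (hn : 1 < n) : Odd (oddPart n) := by
  rw [← Nat.not_even_iff_odd, even_iff_two_dvd]
  exact Nat.not_dvd_ordCompl Nat.prime_two (by omega)

lemma s2_pos {n : ℕ} (hn : 1 < n) (hodd : Odd n) : 0 < s2 n := by
  refine Nat.prime_two.factorization_pos_of_dvd (by omega) ?_
  obtain ⟨c, hc⟩ := hodd
  omega

lemma witnessSet_eq_image {n : ℕ} [NeZero n] (hn : 1 < n) :
    witnessSet n = (witnessUnits n).image fun u : (ZMod n)ˣ ↦ (u : ZMod n).val := by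
  have : Fact (1 < n) := ⟨hn⟩
  have units_eq_iff (u : (ZMod n)ˣ) (m : ℕ) (c : (ZMod n)ˣ) :
      u ^ m = c ↔ (u : ZMod n) ^ m = (c : ZMod n) := by
    rw [← Units.val_pow_eq_pow_val, Units.val_inj]
  ext a
  simp only [witnessSet, witnessUnits, mem_filter, mem_range, mem_image, mem_univ, true_and, ne_eq,
    units_eq_iff, Units.val_one, Units.val_neg]
  constructor
  · rintro ⟨han, -, hgcd, h1, h2⟩
    refine ⟨ZMod.unitOfCoprime a hgcd, ⟨?_, ?_⟩, ?_⟩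
    · simpa using h1
    · simpa using h2
    · simpa using ZMod.val_cast_of_lt han
  · rintro ⟨u, ⟨h1, h2⟩, rfl⟩
    refine ⟨ZMod.val_lt _, ?_, ZMod.val_coe_unit_coprime u, ?_, ?_⟩
    · by_contra! hle
      interval_cases h : (u : ZMod n).val
      · exact u.ne_zero ((ZMod.val_eq_zero _).mp h)
      · refine h1 ?_
        have : (u : ZMod n) = 1 := by rw [← ZMod.natCast_zmod_val (u : ZMod n), h, Nat.cast_one]
        rw [this, one_pow]
    · simpa using h1
    · simpa using h2

lemma exists_max_pow_eq_neg_one {n : ℕ} (hn : 1 < n) (hodd : Odd n) :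
    ∃ j < s2 n, (∃ u : (ZMod n)ˣ, u ^ (2 ^ j * oddPart n) = -1) ∧
      ∀ i < s2 n, (∃ u : (ZMod n)ˣ, u ^ (2 ^ i * oddPart n) = -1) → i ≤ j := by
  classical
  let J := (range (s2 n)).filter fun j ↦ ∃ u : (ZMod n)ˣ, u ^ (2 ^ j * oddPart n) = -1
  have hJ : J.Nonempty :=
    ⟨0, by simpa [J, s2_pos hn hodd] using ⟨-1, (odd_oddPart hn).neg_one_pow⟩⟩
  obtain ⟨j, hj, hmax⟩ := J.exists_max_image id hJ
  simp only [J, mem_filter, mem_range] at hj hmax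
  exact ⟨j, hj.1, hj.2, fun i hi hu ↦ hmax i ⟨hi, hu⟩⟩

lemma pow_two_pow_eq_one_or_eq_neg_one {R : Type*} [Monoid R] [HasDistribNeg R] {u : R}
    {d i j : ℕ} (hij : i ≤ j) (h : u ^ (2 ^ i * d) = -1) :
    u ^ (2 ^ j * d) = 1 ∨ u ^ (2 ^ j * d) = -1 := by
  obtain ⟨c, rfl⟩ := Nat.exists_eq_add_of_le hij
  have : 2 ^ (i + c) * d = 2 ^ i * d * 2 ^ c := by ring
  rw [this, pow_mul, h]
  exact neg_one_pow_eq_or R _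

lemma totient_le_two_mul_card_witnessUnits {n : ℕ} [NeZero n] (hodd : Odd n) (hnp : ¬ n.Prime)
    (hn : 1 < n) : n.totient ≤ 2 * #(witnessUnits n) := by
  classical
  obtain ⟨j, hj, ⟨b, hb⟩, hmax⟩ := exists_max_pow_eq_neg_one hn hodd
  have hdvd : 2 * (2 ^ j * oddPart n) ∣ n - 1 := by
    rw [← two_pow_s2_mul_oddPart n, ← mul_assoc, ← pow_succ']
    exact mul_dvd_mul_right (pow_dvd_pow 2 hj) _
  obtain ⟨v, hv1, hv2⟩ := exists_unit_pow_ne_one_and_ne_neg_one hodd hnp hn hdvd hb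
  have hliar (u : (ZMod n)ˣ) (hu : u ∉ witnessUnits n) :
      u ^ (2 ^ j * oddPart n) = 1 ∨ u ^ (2 ^ j * oddPart n) = -1 := by
    simp only [witnessUnits, mem_filter, mem_univ, true_and, not_and_or, not_not, not_forall] at hu
    rcases hu with h | ⟨i, hi, h⟩
    · left
      rw [mul_comm, pow_mul, h, one_pow]
    · exact pow_two_pow_eq_one_or_eq_neg_one (hmax i hi ⟨u, h⟩) h
  have hle : #(witnessUnits n)ᶜ ≤ #(witnessUnits n) := by
    refine card_le_card_of_injOn (fun u ↦ v * u) ?_ (fun x _ y _ hxy ↦ by simpa using hxy)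
    intro u hu
    by_contra hvu
    have hu' := hliar u (by simpa using hu)
    have hvu' := hliar (v * u) hvu
    rw [mul_pow] at hvu'
    rcases hu' with h | h <;> rw [h] at hvu' <;> rcases hvu' with h' | h'
    · exact hv1 (by simpa using h')
    · exact hv2 (by simpa using h')
    · exact hv2 (by rw [← h', mul_neg, mul_one, neg_neg])
    · exact hv1 (by simpa using h')
  have hcard := card_add_card_compl (witnessUnits n)
  rw [ZMod.card_units_eq_totient] at hcard
  omega

lemma sum_witnessUnits_add {n : ℕ} [NeZero n] (hn : 2 < n) {j : ℕ} (hj : j < s2 n)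
    (hmax : ∀ i < s2 n, (∃ u : (ZMod n)ˣ, u ^ (2 ^ i * oddPart n) = -1) → i ≤ j)
    (f : (ZMod n)ˣ → ℂ) :
    ∑ u, f u = ∑ u ∈ witnessUnits n, f u + (∑ u with u ^ oddPart n = 1, f u +
      ∑ i ∈ range (j + 1), ∑ u with u ^ (2 ^ i * oddPart n) = -1, f u) := by
  classical
  have : Fact (2 < n) := ⟨hn⟩
  have hne : (-1 : (ZMod n)ˣ) ≠ 1 := fun h ↦
    ZMod.neg_one_ne_one (by simpa using congrArg Units.val h)
  have pow_eq_one {u : (ZMod n)ˣ} {a b : ℕ} (hab : a < b) (h : u ^ (2 ^ a * oddPart n) = -1) :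
      u ^ (2 ^ b * oddPart n) = 1 := by
    obtain ⟨c, rfl⟩ := Nat.exists_eq_add_of_lt hab
    have : 2 ^ (a + c + 1) * oddPart n = 2 ^ a * oddPart n * 2 * 2 ^ c := by ring
    rw [this, pow_mul, pow_mul, h]
    simp
  have hdisj : ((range (j + 1) : Finset ℕ) : Set ℕ).PairwiseDisjoint
      fun i ↦ ({u | u ^ (2 ^ i * oddPart n) = -1} : Finset (ZMod n)ˣ) := by
    intro a _ b _ hab
    rw [Function.onFun, disjoint_left]
    intro u ha hb
    simp only [mem_filter, mem_univ, true_and] at ha hb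
    rcases lt_or_gt_of_ne hab with h | h
    · exact hne (hb.symm.trans (pow_eq_one h ha))
    · exact hne (ha.symm.trans (pow_eq_one h hb))
  rw [← sum_biUnion hdisj, ← sum_union, ← sum_add_sum_compl (witnessUnits n)]
  · congr 2
    ext u
    simp only [witnessUnits, mem_compl, mem_filter, mem_univ, true_and, not_and_or, not_not,
      not_forall, mem_union, mem_biUnion, mem_range, exists_prop, ne_eq]
    refine or_congr_right ⟨fun ⟨i, hi, h⟩ ↦ ⟨i, Nat.lt_succ_of_le (hmax i hi ⟨u, h⟩), h⟩,
      fun ⟨i, hi, h⟩ ↦ ⟨i, by omega, h⟩⟩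
  · rw [disjoint_left]
    intro u h1 h2
    simp only [mem_filter, mem_univ, true_and, mem_biUnion, mem_range] at h1 h2
    obtain ⟨i, -, h⟩ := h2
    rw [mul_comm, pow_mul, h1, one_pow] at h
    exact hne h.symm

lemma norm_sum_witnessUnits_le {n : ℕ} [NeZero n] (hn : 2 < n) {k : ℤ} (hk : k ≠ 0) {j : ℕ}
    (hj : j < s2 n)
    (hmax : ∀ i < s2 n, (∃ u : (ZMod n)ˣ, u ^ (2 ^ i * oddPart n) = -1) → i ≤ j) :
    ‖∑ u ∈ witnessUnits n, ZMod.stdAddChar ((k : ZMod n) * (u : ZMod n))‖ ≤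
      (j + 3) * √(k.natAbs * n) := by
  have hall := norm_sum_stdAddChar_pow_eq_le (n := n) hk 0 1
  have hone := norm_sum_stdAddChar_pow_eq_le (n := n) hk (oddPart n) 1
  have hneg : ‖∑ i ∈ range (j + 1), ∑ u : (ZMod n)ˣ with u ^ (2 ^ i * oddPart n) = -1,
      ZMod.stdAddChar ((k : ZMod n) * (u : ZMod n))‖ ≤ (j + 1) * √(k.natAbs * n) := by
    refine (norm_sum_le_of_le _ fun i _ ↦ norm_sum_stdAddChar_pow_eq_le hk _ _).trans_eq ?_
    simp
  simp only [pow_zero, filter_true] at hall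
  rw [eq_sub_of_add_eq
    (sum_witnessUnits_add hn hj hmax fun u ↦ ZMod.stdAddChar ((k : ZMod n) * (u : ZMod n))).symm]
  refine (norm_sub_le _ _).trans ?_
  have := norm_add_le (∑ u : (ZMod n)ˣ with u ^ oddPart n = 1,
      ZMod.stdAddChar ((k : ZMod n) * (u : ZMod n)))
    (∑ i ∈ range (j + 1), ∑ u : (ZMod n)ˣ with u ^ (2 ^ i * oddPart n) = -1,
      ZMod.stdAddChar ((k : ZMod n) * (u : ZMod n)))
  linarith

/-- the normalized witness exponential sum is at most C_k · log n / √n. -/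
theorem witness_sum_normalized_bound (k : ℤ) (hk : k ≠ 0) :
    ∃ C : ℝ, ∀ n : ℕ, Odd n → ¬ n.Prime → 1 < n →
      ‖∑ w ∈ witnessSet n, e ((k : ℝ) * w / n)‖ / ((witnessSet n).card : ℝ) ≤
        C * Real.log n / Real.sqrt n := by
  refine ⟨12 * √k.natAbs / Real.log 2, fun n hodd hnp hn ↦ ?_⟩
  have : NeZero n := ⟨by omega⟩
  have hn2 : 2 < n := by
    obtain ⟨c, hc⟩ := hodd
    omega
  obtain ⟨j, hj, ⟨b, hb⟩, hmax⟩ := exists_max_pow_eq_neg_one hn hodd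
  have hinj : Function.Injective fun u : (ZMod n)ˣ ↦ (u : ZMod n).val :=
    (ZMod.val_injective n).comp Units.val_injective
  rw [witnessSet_eq_image hn, sum_image hinj.injOn, card_image_of_injective _ hinj]
  simp_rw [e_mul_div_eq_stdAddChar]
  have hsum := norm_sum_witnessUnits_le hn2 hk hj hmax
  set r := #n.primeFactors with hr
  have hr1 : (1 : ℝ) ≤ r := by
    exact_mod_cast card_pos.mpr (Nat.nonempty_primeFactors.mpr hn)
  have hlog : ((j : ℝ) + 1) * r * Real.log 2 ≤ Real.log n := by
    have h := two_pow_mul_card_primeFactors_le hodd hb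
    have h' : ((2 : ℝ) ^ ((j + 1) * r)) ≤ n := by exact_mod_cast h
    have := Real.log_le_log (by positivity) h'
    rw [Real.log_pow] at this
    exact_mod_cast this
  have hW : (n : ℝ) ≤ 4 * r * #(witnessUnits n) := by
    have h1 : (n : ℝ) ≤ (r + 1) * n.totient := by
      exact_mod_cast le_card_primeFactors_add_one_mul_totient n
    have h2 : (n.totient : ℝ) ≤ 2 * #(witnessUnits n) := by
      exact_mod_cast totient_le_two_mul_card_witnessUnits hodd hnp hn
    calc (n : ℝ) ≤ (r + 1) * n.totient := h1
      _ ≤ (2 * r) * (2 * #(witnessUnits n)) := by gcongr; linarith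
      _ = _ := by ring
  have hnpos : (0 : ℝ) < n := by exact_mod_cast (by omega : 0 < n)
  have hWpos : (0 : ℝ) < #(witnessUnits n) := by
    by_contra! h
    have : 4 * (r : ℝ) * #(witnessUnits n) ≤ 0 := mul_nonpos_of_nonneg_of_nonpos (by positivity) h
    linarith
  have hlog2 : 0 < Real.log 2 := Real.log_pos one_lt_two
  have hsqrt : √(n : ℝ) * √n = n := Real.mul_self_sqrt hnpos.le
  rw [Real.sqrt_mul (Nat.cast_nonneg _)] at hsum
  rw [div_le_div_iff₀ hWpos (by positivity)]
  calc _ ≤ ((j : ℝ) + 3) * (√k.natAbs * √n) * √n := by gcongr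
    _ = ((j : ℝ) + 3) * √k.natAbs * n := by linear_combination ((j : ℝ) + 3) * √k.natAbs * hsqrt
    _ ≤ (3 * (j + 1)) * √k.natAbs * (4 * r * #(witnessUnits n)) := by gcongr; linarith
    _ = 12 * √k.natAbs * (((j : ℝ) + 1) * r * Real.log 2 / Real.log 2) * #(witnessUnits n) := by
        rw [mul_div_cancel_right₀ _ hlog2.ne']
        ring
    _ ≤ 12 * √k.natAbs * (Real.log n / Real.log 2) * #(witnessUnits n) := by gcongr
    _ = _ := by ring
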